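/- arXiv:1402.6817 — 2 statements merged into one kernel-verified Lean document; each statement's English description precedes it below -/
import Mathlib

section
/- Let A be a Hadamard matrix of order h ≥ 4, let d ≥ 1, and for each B ∈ {−1,1}^{h×d} define C by c_{ij} = sgn((AᵀB)_{ji}) and F = C A⁻¹ B. Then for all pairs (i, j) and (k, ℓ) with i ≠ j and k ≠ ℓ, |E[f_{ij} f_{kℓ}]| ≤ E[|f_{ij} f_{kℓ}|] ≤ 1. -/
open Matrix

/-- The `±1` sign function: `sgn x = 1` if `x ≥ 0`, `−1` if `x < 0`. -/
noncomputable def sgn (x : ℝ) : ℝ := if 0 ≤ x then 1 else -1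

/-- The `h × d` sign matrix corresponding to a Boolean matrix `b`. -/
noncomputable def signMat {h d : ℕ} (b : Fin h → Fin d → Bool) :
    Matrix (Fin h) (Fin d) ℝ :=
  Matrix.of fun i j => if b i j then (1 : ℝ) else -1

/-- The matrix `C` with `c_{ij} = sgn((Aᵀ B)_{ji})`. -/
noncomputable def Cmat {h d : ℕ} (A : Matrix (Fin h) (Fin h) ℝ)
    (B : Matrix (Fin h) (Fin d) ℝ) : Matrix (Fin d) (Fin h) ℝ :=
  Matrix.of fun i j => sgn ((Aᵀ * B) j i)

/-- The matrix `F = C A⁻¹ B`. -/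
noncomputable def Fmat {h d : ℕ} (A : Matrix (Fin h) (Fin h) ℝ)
    (B : Matrix (Fin h) (Fin d) ℝ) : Matrix (Fin d) (Fin d) ℝ :=
  Cmat A B * A⁻¹ * B

/-- Expectation of `f(B)`, averaged over the `2^(h·d)` equally likely
`h × d` matrices `B` with entries in `{−1, 1}`. -/
noncomputable def expec (h d : ℕ) (f : Matrix (Fin h) (Fin d) ℝ → ℝ) : ℝ :=
  (∑ b : Fin h → Fin d → Bool, f (signMat b)) / 2 ^ (h * d)


lemma sgn_mul_self_aux (x : ℝ) : sgn x * sgn x = 1 := by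
  unfold sgn; split_ifs <;> norm_num

/-- Flip the entry at position `(m, j)`. -/
def flipEntry {h d : ℕ} (m : Fin h) (j : Fin d) (b : Fin h → Fin d → Bool) :
    Fin h → Fin d → Bool :=
  fun m' j' => if m' = m ∧ j' = j then !(b m' j') else b m' j'

lemma flipEntry_invol {h d : ℕ} (m : Fin h) (j : Fin d) :
    Function.Involutive (flipEntry (h := h) (d := d) m j) := by
  intro b
  funext m' j'
  unfold flipEntry
  split_ifs <;> simp

lemma row_normsq {h d : ℕ} (hh : 4 ≤ h) (A : Matrix (Fin h) (Fin h) ℝ)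
    (hA2 : Aᵀ * A = (h : ℝ) • 1) (B : Matrix (Fin h) (Fin d) ℝ) (i : Fin d) :
    ∑ m, (Cmat A B * A⁻¹) i m * (Cmat A B * A⁻¹) i m = 1 := by
  have h0 : (h : ℝ) ≠ 0 := by
    have : h ≠ 0 := by omega
    exact_mod_cast this
  have hl : ((h : ℝ)⁻¹ • Aᵀ) * A = 1 := by
    rw [Matrix.smul_mul, hA2, smul_smul, inv_mul_cancel₀ h0, one_smul]
  have hinv : A⁻¹ = (h : ℝ)⁻¹ • Aᵀ := Matrix.inv_eq_left_inv hl
  have hinvT : A⁻¹ * (A⁻¹)ᵀ = (h : ℝ)⁻¹ • 1 := by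
    rw [hinv, Matrix.transpose_smul, Matrix.transpose_transpose, Matrix.mul_smul, hl]
  have key : (Cmat A B * A⁻¹) * (Cmat A B * A⁻¹)ᵀ
      = (h : ℝ)⁻¹ • (Cmat A B * (Cmat A B)ᵀ) := by
    rw [Matrix.transpose_mul, Matrix.mul_assoc, ← Matrix.mul_assoc A⁻¹, hinvT]
    simp
  have k2 := congrFun (congrFun key i) i
  rw [Matrix.mul_apply] at k2
  simp only [Matrix.transpose_apply] at k2
  rw [k2, Matrix.smul_apply, Matrix.mul_apply]
  simp only [Matrix.transpose_apply]
  have : ∀ m, Cmat A B i m * Cmat A B i m = 1 := fun m => sgn_mul_self_aux _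
  simp [this, h0]

lemma Cmat_flip {h d : ℕ} (A : Matrix (Fin h) (Fin h) ℝ) (i j : Fin d) (hij : i ≠ j)
    (m : Fin h) (b : Fin h → Fin d → Bool) (n : Fin h) :
    (Cmat A (signMat (flipEntry m j b)) * A⁻¹) i n = (Cmat A (signMat b) * A⁻¹) i n := by
  simp only [Matrix.mul_apply, Cmat, signMat, flipEntry, Matrix.of_apply]
  simp [hij]

lemma cross_zero {h d : ℕ} (A : Matrix (Fin h) (Fin h) ℝ) (i j : Fin d) (hij : i ≠ j)
    (m n : Fin h) (hmn : m ≠ n) :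
    ∑ b : Fin h → Fin d → Bool,
      ((Cmat A (signMat b) * A⁻¹) i m * signMat b m j) *
      ((Cmat A (signMat b) * A⁻¹) i n * signMat b n j) = 0 := by
  have e := Equiv.sum_comp (flipEntry_invol (h := h) (d := d) m j).toPerm
    (fun b => ((Cmat A (signMat b) * A⁻¹) i m * signMat b m j) *
      ((Cmat A (signMat b) * A⁻¹) i n * signMat b n j))
  have e2 : ∀ b : Fin h → Fin d → Bool,
      ((Cmat A (signMat (flipEntry m j b)) * A⁻¹) i m * signMat (flipEntry m j b) m j) *
      ((Cmat A (signMat (flipEntry m j b)) * A⁻¹) i n * signMat (flipEntry m j b) n j)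
      = - (((Cmat A (signMat b) * A⁻¹) i m * signMat b m j) *
      ((Cmat A (signMat b) * A⁻¹) i n * signMat b n j)) := by
    intro b
    rw [Cmat_flip A i j hij, Cmat_flip A i j hij]
    have h1 : signMat (flipEntry m j b) m j = - signMat b m j := by
      cases hb : b m j <;> simp [signMat, flipEntry, hb]
    have h2 : signMat (flipEntry m j b) n j = signMat b n j := by
      simp [signMat, flipEntry, hmn.symm]
    rw [h1, h2]; ring
  simp only [Function.Involutive.coe_toPerm, e2, Finset.sum_neg_distrib] at e
  linarith

lemma sum_sq {h d : ℕ} (hh : 4 ≤ h) (A : Matrix (Fin h) (Fin h) ℝ)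
    (hA2 : Aᵀ * A = (h : ℝ) • 1) (i j : Fin d) (hij : i ≠ j) :
    ∑ b : Fin h → Fin d → Bool, (Fmat A (signMat b) i j) ^ 2 = 2 ^ (h * d) := by
  have e : ∀ b : Fin h → Fin d → Bool, (Fmat A (signMat b) i j) ^ 2 =
      ∑ m, ∑ n, ((Cmat A (signMat b) * A⁻¹) i m * signMat b m j) *
      ((Cmat A (signMat b) * A⁻¹) i n * signMat b n j) := by
    intro b
    rw [Fmat, Matrix.mul_apply, sq, Finset.sum_mul_sum]
  simp only [e]
  rw [Finset.sum_comm]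
  have e2 : ∀ m : Fin h, ∑ b : Fin h → Fin d → Bool, ∑ n,
      ((Cmat A (signMat b) * A⁻¹) i m * signMat b m j) *
      ((Cmat A (signMat b) * A⁻¹) i n * signMat b n j)
      = ∑ b : Fin h → Fin d → Bool,
        (Cmat A (signMat b) * A⁻¹) i m * (Cmat A (signMat b) * A⁻¹) i m := by
    intro m
    rw [Finset.sum_comm, Finset.sum_eq_single m]
    · refine Finset.sum_congr rfl fun b _ => ?_
      have : signMat b m j * signMat b m j = 1 := by
        cases hb : b m j <;> simp [signMat, hb]
      linear_combination ((Cmat A (signMat b) * A⁻¹) i m) ^ 2 * this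
    · intro n _ hn
      exact cross_zero A i j hij m n hn.symm
    · simp
  simp only [e2]
  rw [Finset.sum_comm]
  simp only [row_normsq hh A hA2]
  simp [pow_mul, mul_comm h d]

/-- Let `A` be a Hadamard matrix of order `h ≥ 4`, `d ≥ 1`, and for each
`B ∈ {−1,1}^{h×d}` set `C = sgn(AᵀB)ᵀ` and `F = C A⁻¹ B`.  Then for all
pairs `(i, j)` and `(k, ℓ)` with `i ≠ j` and `k ≠ ℓ`,
`|E[f_{ij} f_{kℓ}]| ≤ E[|f_{ij} f_{kℓ}|] ≤ 1`. -/
theorem expec_F_product_bound (h d : ℕ) (h4 : 4 ∣ h) (hh : 4 ≤ h) (hd : 1 ≤ d)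
    (A : Matrix (Fin h) (Fin h) ℝ)
    (hA1 : ∀ i j, A i j = 1 ∨ A i j = -1)
    (hA2 : Aᵀ * A = (h : ℝ) • 1) :
    ∀ i j k l : Fin d, i ≠ j → k ≠ l →
      |expec h d (fun B => Fmat A B i j * Fmat A B k l)| ≤
        expec h d (fun B => |Fmat A B i j * Fmat A B k l|) ∧
      expec h d (fun B => |Fmat A B i j * Fmat A B k l|) ≤ 1 := by
  intro i j k l hij hkl
  have hpos : (0 : ℝ) < 2 ^ (h * d) := by positivity
  refine ⟨?_, ?_⟩
  · unfold expec
    rw [abs_div, abs_of_pos hpos]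
    exact div_le_div_of_nonneg_right (Finset.abs_sum_le_sum_abs _ _) hpos.le
  · unfold expec
    rw [div_le_one hpos]
    have h1 := sum_sq hh A hA2 i j hij
    have h2 := sum_sq hh A hA2 k l hkl
    have h3 : ∑ b : Fin h → Fin d → Bool, |Fmat A (signMat b) i j * Fmat A (signMat b) k l|
        ≤ ∑ b : Fin h → Fin d → Bool,
          ((Fmat A (signMat b) i j) ^ 2 + (Fmat A (signMat b) k l) ^ 2) / 2 := by
      refine Finset.sum_le_sum fun b _ => ?_
      rw [abs_le]
      constructor <;>
      nlinarith [sq_nonneg (Fmat A (signMat b) i j - Fmat A (signMat b) k l),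
        sq_nonneg (Fmat A (signMat b) i j + Fmat A (signMat b) k l)]
    rw [← Finset.sum_div, Finset.sum_add_distrib, h1, h2] at h3
    linarith
end

section
/- Let n = h + d where h ≥ 4 is a Hadamard order and 1 ≤ d ≤ 3. Then D(n) ≥ h^{h/2}·(μ(h)^d − η), where η = 0 if d = 1, η = 1 if d = 2, and η = 5·√h + 3 if d = 3. -/
open Matrix

/-- A positive integer `m` is a Hadamard order if there is an `m × m` matrix
with entries in `{−1, 1}` satisfying `Aᵀ A = m I`. -/
def IsHadamardOrder (m : ℕ) : Prop :=
  ∃ A : Matrix (Fin m) (Fin m) ℝ,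
    (∀ i j, A i j = 1 ∨ A i j = -1) ∧ Aᵀ * A = (m : ℝ) • 1

/-- `D(n)`: the maximal determinant of an `n × n` matrix with entries in
`{−1, 1}`. -/
noncomputable def maxDet (n : ℕ) : ℝ :=
  sSup {x : ℝ | ∃ M : Matrix (Fin n) (Fin n) ℝ,
    (∀ i j, M i j = 1 ∨ M i j = -1) ∧ M.det = x}

/-- `μ(h) = 1 + 2^{−h} h binom(h, h/2)`. -/
noncomputable def mu (h : ℕ) : ℝ :=
  1 + (2 : ℝ) ^ (-(h : ℤ)) * h * (h.choose (h / 2) : ℝ)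

lemma md_bdd (n : ℕ) : BddAbove {x : ℝ | ∃ M : Matrix (Fin n) (Fin n) ℝ,
    (∀ i j, M i j = 1 ∨ M i j = -1) ∧ M.det = x} := by
  refine ⟨(n.factorial : ℝ), ?_⟩
  rintro x ⟨M, hM, rfl⟩
  have := Matrix.det_le (A := M) (abv := AbsoluteValue.abs) (x := (1:ℝ)) (by
    intro i j
    rcases hM i j with h | h <;> simp [h])
  simp at this
  exact (le_abs_self _).trans this

lemma md_abs (n : ℕ) (hn : 0 < n) (M : Matrix (Fin n) (Fin n) ℝ)
    (hM : ∀ i j, M i j = 1 ∨ M i j = -1) : |M.det| ≤ maxDet n := by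
  rcases abs_choice M.det with h | h
  · rw [h]; exact le_csSup (md_bdd n) ⟨M, hM, rfl⟩
  · rw [h]
    refine le_csSup (md_bdd n) ⟨M.updateRow ⟨0, hn⟩ ((-1 : ℝ) • M ⟨0, hn⟩), ?_, ?_⟩
    · intro i j
      by_cases hi : i = ⟨0, hn⟩
      · subst hi
        rcases hM ⟨0, hn⟩ j with h | h <;> simp [h]
      · rw [Matrix.updateRow_ne hi]; exact hM i j
    · rw [Matrix.det_updateRow_smul, Matrix.updateRow_eq_self]; ring

lemma md_block (h d : ℕ) (hh : 0 < h) (A : Matrix (Fin h) (Fin h) ℝ)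
    (hA : ∀ i j, A i j = 1 ∨ A i j = -1) (hAA : Aᵀ * A = (h : ℝ) • 1)
    (B : Matrix (Fin h) (Fin d) ℝ) (hB : ∀ i j, B i j = 1 ∨ B i j = -1)
    (C : Matrix (Fin d) (Fin h) ℝ) (hC : ∀ i j, C i j = 1 ∨ C i j = -1)
    (D : Matrix (Fin d) (Fin d) ℝ) (hD : ∀ i j, D i j = 1 ∨ D i j = -1) :
    (h : ℝ) ^ ((h : ℝ) / 2) * (((1 / h : ℝ) • (C * Aᵀ * B)) - D).det ≤ maxDet (h + d) := by
  have h0 : (0 : ℝ) < h := by exact_mod_cast hh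
  have hL : ((1 / h : ℝ) • Aᵀ) * A = 1 := by
    rw [Matrix.smul_mul, hAA, smul_smul, one_div, inv_mul_cancel₀ h0.ne', one_smul]
  let iA : Invertible A := ⟨(1 / h : ℝ) • Aᵀ, hL, mul_eq_one_comm.1 hL⟩
  have hinv : ⅟A = (1 / h : ℝ) • Aᵀ := rfl
  have hdet : |A.det| = (h : ℝ) ^ ((h : ℝ) / 2) := by
    have h1 : A.det ^ 2 = (h : ℝ) ^ h := by
      have := congrArg Matrix.det hAA
      rw [Matrix.det_mul, Matrix.det_transpose, Matrix.det_smul, Matrix.det_one] at this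
      simp at this
      rw [sq, this]
    have h2 : ((h : ℝ) ^ ((h : ℝ) / 2)) ^ 2 = (h : ℝ) ^ h := by
      rw [← Real.rpow_natCast, ← Real.rpow_mul h0.le, ← Real.rpow_natCast]
      congr 1
      push_cast
      ring
    have h3 : 0 ≤ (h : ℝ) ^ ((h : ℝ) / 2) := by positivity
    rw [← abs_of_nonneg h3]
    exact (sq_eq_sq_iff_abs_eq_abs _ _).1 (h1.trans h2.symm)
  have key := md_abs (h + d) (by omega)
    ((Matrix.fromBlocks A B C D).submatrix finSumFinEquiv.symm finSumFinEquiv.symm) (by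
      intro i j
      simp only [Matrix.submatrix_apply]
      rcases finSumFinEquiv.symm i with i | i <;> rcases finSumFinEquiv.symm j with j | j
      · exact hA i j
      · exact hB i j
      · exact hC i j
      · exact hD i j)
  rw [Matrix.det_submatrix_equiv_self, Matrix.det_fromBlocks₁₁, abs_mul, hdet] at key
  refine le_trans (mul_le_mul_of_nonneg_left ?_ (by positivity)) key
  have : D - C * ⅟A * B = -(((1 / h : ℝ) • (C * Aᵀ * B)) - D) := by
    rw [hinv]; simp
  rw [this, Matrix.det_neg, abs_mul]
  simp
  exact le_abs_self _

noncomputable def sg (x : ℝ) : ℝ := if 0 ≤ x then 1 else -1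

lemma sg_mul (x : ℝ) : sg x * x = |x| := by
  unfold sg; split_ifs with h
  · rw [abs_of_nonneg h, one_mul]
  · rw [abs_of_neg (not_le.1 h)]; ring

lemma sg_pm (x : ℝ) : sg x = 1 ∨ sg x = -1 := by
  unfold sg; split_ifs <;> simp

abbrev Om (h : ℕ) := Fin h → ℤˣ

/-- expectation -/
noncomputable def EE (h : ℕ) (f : Om h → ℝ) : ℝ := (∑ b, f b) / 2 ^ h

lemma EE_add (h : ℕ) (f g : Om h → ℝ) : EE h (fun b => f b + g b) = EE h f + EE h g := by
  simp [EE, Finset.sum_add_distrib, add_div]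
lemma EE_sub (h : ℕ) (f g : Om h → ℝ) : EE h (fun b => f b - g b) = EE h f - EE h g := by
  simp [EE, Finset.sum_sub_distrib, sub_div]
lemma EE_mul (h : ℕ) (c : ℝ) (g : Om h → ℝ) : EE h (fun b => c * g b) = c * EE h g := by
  simp [EE, ← Finset.mul_sum, mul_div_assoc]
lemma EE_sum (h : ℕ) {ι : Type} (s : Finset ι) (g : ι → Om h → ℝ) :
    EE h (fun b => ∑ i ∈ s, g i b) = ∑ i ∈ s, EE h (g i) := by
  unfold EE; rw [Finset.sum_comm, Finset.sum_div]
lemma Om_card (h : ℕ) : ((Finset.univ : Finset (Om h)).card : ℝ) = 2 ^ h := by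
  simp [Om]
lemma EE_const (h : ℕ) (c : ℝ) : EE h (fun _ => c) = c := by
  unfold EE
  rw [Finset.sum_const, nsmul_eq_mul, Om_card]
  field_simp

lemma EE_exists (h : ℕ) (f : Om h → ℝ) : ∃ b, EE h f ≤ f b := by
  have : ∃ b ∈ (Finset.univ : Finset (Om h)), (fun _ => EE h f) b ≤ f b := by
    apply Finset.exists_le_of_sum_le Finset.univ_nonempty
    rw [Finset.sum_const, nsmul_eq_mul, Om_card]
    unfold EE
    apply le_of_eq
    field_simp
  obtain ⟨b, -, hb⟩ := this
  exact ⟨b, hb⟩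

lemma EE_mono (h : ℕ) (f g : Om h → ℝ) (H : ∀ b, f b ≤ g b) : EE h f ≤ EE h g := by
  unfold EE
  gcongr
  exact H _

/-- real value of a sign vector -/
def rv {h : ℕ} (b : Om h) (i : Fin h) : ℝ := ((b i : ℤ) : ℝ)

lemma rv_pm {h : ℕ} (b : Om h) (i : Fin h) : rv b i = 1 ∨ rv b i = -1 := by
  unfold rv
  rcases Int.units_eq_one_or (b i) with h | h <;> simp [h]

/-- expected absolute value -/
noncomputable def ee (h : ℕ) : ℝ := EE h (fun b => |∑ i, rv b i|)

lemma EE_sym (h : ℕ) (hh : 0 < h) (j : Fin h) :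
    EE h (fun b => sg (∑ i, rv b i) * rv b j) = ee h / h := by
  have hc : ∀ j j' : Fin h, EE h (fun b => sg (∑ i, rv b i) * rv b j) =
      EE h (fun b => sg (∑ i, rv b i) * rv b j') := by
    intro j j'
    unfold EE
    congr 1
    refine Fintype.sum_equiv (Equiv.arrowCongr (Equiv.swap j j') (Equiv.refl _)) _ _ ?_
    intro b
    have h1 : ∀ i, rv ((Equiv.arrowCongr (Equiv.swap j j') (Equiv.refl _)) b) i =
        rv b (Equiv.swap j j' i) := by
      intro i; simp [rv]
    simp only [h1]
    rw [Equiv.sum_comp (Equiv.swap j j') (fun i => rv b i)]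
    simp
  have hs : ee h = ∑ j' : Fin h, EE h (fun b => sg (∑ i, rv b i) * rv b j') := by
    rw [← EE_sum]
    unfold ee
    congr 1
    ext b
    rw [← Finset.mul_sum, sg_mul]
  rw [hs, Finset.sum_congr rfl (fun j' _ => hc j' j)]
  have : (h : ℝ) ≠ 0 := by positivity
  simp
  field_simp

/-- transformed vector -/
noncomputable def uu {h : ℕ} (A : Matrix (Fin h) (Fin h) ℝ) (b : Om h) (k : Fin h) : ℝ :=
  ∑ j, A j k * rv b j

lemma EE_sb (h : ℕ) (hh : 0 < h) (A : Matrix (Fin h) (Fin h) ℝ)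
    (hA : ∀ i j, A i j = 1 ∨ A i j = -1) (k j : Fin h) :
    EE h (fun b => sg (uu A b k) * rv b j) = A j k * (ee h / h) := by
  have : ∃ ε : Om h, ∀ i, rv ε i = A i k := by
    refine ⟨fun i => if A i k = 1 then 1 else -1, fun i => ?_⟩
    rcases hA i k with h | h
    · simp [rv, h]
    · rw [rv, h]; norm_num
  obtain ⟨ε, hε⟩ := this
  rw [← EE_sym h hh j, ← EE_mul]
  unfold EE
  congr 1
  refine Fintype.sum_equiv (Equiv.mulLeft ε) _ _ ?_
  intro b
  have h1 : ∀ i, rv (ε * b) i = A i k * rv b i := by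
    intro i; rw [← hε]; simp [rv]
  simp only [Equiv.coe_mulLeft, h1, uu]
  rcases hA j k with h | h <;> rw [h] <;> ring

lemma EE_su (h : ℕ) (hh : 0 < h) (A : Matrix (Fin h) (Fin h) ℝ)
    (hA : ∀ i j, A i j = 1 ∨ A i j = -1) (hAA : Aᵀ * A = (h : ℝ) • 1) (k l : Fin h) :
    EE h (fun b => sg (uu A b k) * uu A b l) = if k = l then ee h else 0 := by
  have h1 : (fun b => sg (uu A b k) * uu A b l) =
      fun b => ∑ j, A j l * (sg (uu A b k) * rv b j) := by
    ext b
    rw [uu.eq_def A b l, Finset.mul_sum]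
    exact Finset.sum_congr rfl fun _ _ => by ring
  rw [h1, EE_sum]
  simp only [EE_mul, EE_sb h hh A hA]
  have h2 := congrFun (congrFun hAA l) k
  rw [Matrix.mul_apply] at h2
  simp only [Matrix.transpose_apply] at h2
  simp only [← mul_assoc]
  rw [← Finset.sum_mul, h2]
  have : (h : ℝ) ≠ 0 := by positivity
  by_cases hkl : k = l
  · subst hkl; simp; field_simp
  · simp [hkl, Matrix.one_apply, Ne.symm hkl]

/-- the bilinear quantity -/
noncomputable def FF {h : ℕ} (A : Matrix (Fin h) (Fin h) ℝ) (a b : Om h) : ℝ :=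
  (1 / h : ℝ) * ∑ k, sg (uu A a k) * uu A b k

lemma EE_FF (h : ℕ) (hh : 0 < h) (A : Matrix (Fin h) (Fin h) ℝ)
    (hA : ∀ i j, A i j = 1 ∨ A i j = -1) (hAA : Aᵀ * A = (h : ℝ) • 1) :
    EE h (fun a => FF A a a) = ee h := by
  unfold FF
  rw [EE_mul, EE_sum]
  simp only [EE_su h hh A hA hAA]
  have : (h : ℝ) ≠ 0 := by positivity
  simp
  field_simp

lemma EE_FF2 (h : ℕ) (hh : 0 < h) (A : Matrix (Fin h) (Fin h) ℝ)
    (hA : ∀ i j, A i j = 1 ∨ A i j = -1) (hAA : Aᵀ * A = (h : ℝ) • 1) (a c : Om h) :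
    EE h (fun b => FF A a b * FF A b c) = ee h / h * FF A a c := by
  have h1 : (fun b => FF A a b * FF A b c) = fun b => (1 / h : ℝ) * ((1 / h : ℝ) *
      ∑ k, ∑ l, (sg (uu A a k) * uu A c l) * (sg (uu A b l) * uu A b k)) := by
    ext b
    unfold FF
    rw [mul_mul_mul_comm, Finset.sum_mul_sum, mul_assoc]
    congr 2
    exact Finset.sum_congr rfl fun _ _ => Finset.sum_congr rfl fun _ _ => by ring
  rw [h1, EE_mul, EE_mul, EE_sum]
  simp only [EE_sum, EE_mul, EE_su h hh A hA hAA]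
  simp only [mul_ite, mul_zero, Finset.sum_ite_eq', Finset.mem_univ, if_true]
  rw [← Finset.sum_mul]
  unfold FF
  ring

lemma FF_le (h : ℕ) (hh : 0 < h) (A : Matrix (Fin h) (Fin h) ℝ)
    (hAA : Aᵀ * A = (h : ℝ) • 1) (a : Om h) :
    FF A a a ≤ Real.sqrt h := by
  have h0 : (0 : ℝ) < h := by exact_mod_cast hh
  have hAA' : A * Aᵀ = (h : ℝ) • 1 := by
    have : ((1 / h : ℝ) • Aᵀ) * A = 1 := by
      rw [Matrix.smul_mul, hAA, smul_smul, one_div, inv_mul_cancel₀ h0.ne', one_smul]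
    have := mul_eq_one_comm.1 this
    rw [Matrix.mul_smul] at this
    rw [← this, smul_smul, one_div, mul_inv_cancel₀ h0.ne', one_smul]
  have hu : ∑ k, uu A a k ^ 2 = (h : ℝ) ^ 2 := by
    have e1 : uu A a = Aᵀ *ᵥ (rv a) := by
      ext k; simp [uu, Matrix.mulVec, dotProduct]
    have e2 : ∑ k, uu A a k ^ 2 = (Aᵀ *ᵥ (rv a)) ⬝ᵥ (Aᵀ *ᵥ (rv a)) := by
      rw [← e1]; simp [dotProduct, sq]
    rw [e2, Matrix.dotProduct_mulVec, Matrix.vecMul_transpose, Matrix.mulVec_mulVec, hAA',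
      Matrix.smul_mulVec, Matrix.one_mulVec, smul_dotProduct]
    have : rv a ⬝ᵥ rv a = h := by
      unfold dotProduct
      have : ∀ i, rv a i * rv a i = 1 := by
        intro i; rcases rv_pm a i with h | h <;> simp [h]
      simp [this]
    rw [this]; simp [sq]
  have hs : (∑ k, |uu A a k|) ^ 2 ≤ (h : ℝ) * (h : ℝ) ^ 2 := by
    have := sq_sum_le_card_mul_sum_sq (s := (Finset.univ : Finset (Fin h)))
      (f := fun k => |uu A a k|)
    simpa [sq_abs, hu] using this
  unfold FF
  simp only [sg_mul]
  apply Real.le_sqrt_of_sq_le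
  rw [mul_pow]
  calc (1 / (h : ℝ)) ^ 2 * (∑ k, |uu A a k|) ^ 2 ≤ (1 / (h : ℝ)) ^ 2 * ((h : ℝ) * (h : ℝ) ^ 2) := by
        gcongr
    _ = (h : ℝ) := by field_simp

lemma ee_nonneg (h : ℕ) : 0 ≤ ee h := by
  unfold ee EE; positivity

lemma choose_tel (n m : ℕ) : ∑ k ∈ Finset.range (m + 1),
    ((n + 1).choose k : ℝ) * ((n : ℝ) + 1 - 2 * k) = (n + 1) * (n.choose m : ℝ) := by
  induction m with
  | zero => simp
  | succ m ih =>
    rw [Finset.sum_range_succ, ih]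
    have h1 : ((n : ℝ) + 1) * n.choose m = (n + 1).choose (m + 1) * (m + 1) := by
      exact_mod_cast Nat.add_one_mul_choose_eq n m
    have h2 : ((n + 1).choose (m + 1) : ℝ) = n.choose m + n.choose (m + 1) := by
      exact_mod_cast Nat.choose_succ_succ n m
    push_cast
    rw [h2] at h1 ⊢
    linear_combination (2 : ℝ) * h1

lemma choose_half (n : ℕ) : (n + 1).choose ((n + 1) / 2) ≤ 2 * n.choose ((n + 1) / 2) := by
  rcases Nat.even_or_odd' n with ⟨m, h | h⟩
  · subst h
    have e : (2 * m + 1) / 2 = m := by omega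
    rw [e]
    cases m with
    | zero => simp
    | succ m =>
      rw [Nat.choose_succ_succ']
      have := Nat.choose_le_middle m (2 * (m + 1))
      rw [show 2 * (m + 1) / 2 = m + 1 by omega] at this
      omega
  · subst h
    have e : (2 * m + 1 + 1) / 2 = m + 1 := by omega
    rw [e, Nat.choose_succ_succ']
    have := Nat.choose_symm_half m
    omega

lemma sum_rv {h : ℕ} (b : Om h) :
    ∑ i, rv b i = (h : ℝ) - 2 * ((Finset.univ.filter (fun i => b i = -1)).card : ℝ) := by
  have : ∀ i, rv b i = 1 - 2 * (if b i = -1 then 1 else 0) := by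
    intro i
    unfold rv
    rcases Int.units_eq_one_or (b i) with h | h
    · rw [h]; simp
    · rw [h]; norm_num
  simp only [this, Finset.sum_sub_distrib, ← Finset.mul_sum, Finset.sum_boole]
  simp

lemma sum_Om (h : ℕ) (g : ℕ → ℝ) :
    ∑ b : Om h, g (Finset.univ.filter (fun i => b i = -1)).card =
      ∑ k ∈ Finset.range (h + 1), (h.choose k : ℝ) * g k := by
  have := Finset.sum_powerset_apply_card g (x := (Finset.univ : Finset (Fin h)))
  simp only [Finset.card_univ, Fintype.card_fin, nsmul_eq_mul] at this
  rw [← this]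
  refine Finset.sum_bij' (fun b _ => Finset.univ.filter (fun i => b i = -1))
    (fun s _ => fun i => if i ∈ s then -1 else 1) ?_ ?_ ?_ ?_ ?_
  · intro b _; simp
  · intro b _; simp
  · intro b _
    ext i
    rcases Int.units_eq_one_or (b i) with h | h <;> simp [h]
  · intro s _
    ext i
    by_cases hi : i ∈ s <;> simp [hi]
  · intro b _; rfl

lemma ee_ge (h : ℕ) (hh : 0 < h) : mu h - 1 ≤ ee h := by
  obtain ⟨n, rfl⟩ : ∃ n, h = n + 1 := ⟨h - 1, by omega⟩
  have e1 : ee (n + 1) = (∑ k ∈ Finset.range (n + 1 + 1),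
      ((n + 1).choose k : ℝ) * |(n : ℝ) + 1 - 2 * k|) / 2 ^ (n + 1) := by
    unfold ee EE
    rw [← sum_Om (n + 1) (fun k => |(n : ℝ) + 1 - 2 * k|)]
    simp only [sum_rv]
    push_cast
    rfl
  set m := (n + 1) / 2 with hm
  have hml : m + 1 ≤ n + 1 + 1 := by omega
  have t1 := choose_tel n m
  have t2 := choose_tel n (n + 1)
  rw [Nat.choose_succ_self] at t2
  rw [← Finset.sum_range_add_sum_Ico _ hml, t1] at t2
  have l1 : ∑ k ∈ Finset.range (m + 1), ((n + 1).choose k : ℝ) * ((n : ℝ) + 1 - 2 * k) ≤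
      ∑ k ∈ Finset.range (m + 1), ((n + 1).choose k : ℝ) * |(n : ℝ) + 1 - 2 * k| := by
    gcongr
    exact le_abs_self _
  have l2 : -∑ k ∈ Finset.Ico (m + 1) (n + 1 + 1), ((n + 1).choose k : ℝ) * ((n : ℝ) + 1 - 2 * k) ≤
      ∑ k ∈ Finset.Ico (m + 1) (n + 1 + 1), ((n + 1).choose k : ℝ) * |(n : ℝ) + 1 - 2 * k| := by
    rw [← Finset.sum_neg_distrib]
    apply Finset.sum_le_sum
    intro k _
    rw [← mul_neg]
    gcongr
    exact neg_le_abs _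
  rw [t1] at l1
  have hch : ((n + 1).choose m : ℝ) ≤ 2 * n.choose m := by exact_mod_cast choose_half n
  have hn : (0 : ℝ) ≤ (n : ℝ) + 1 := by positivity
  have := mul_le_mul_of_nonneg_left hch hn
  rw [e1, ← Finset.sum_range_add_sum_Ico _ hml, le_div_iff₀ (by positivity)]
  unfold mu
  rw [← hm, _root_.zpow_neg, zpow_natCast]
  have e3 : (1 + ((2 : ℝ) ^ (n + 1))⁻¹ * ((n + 1 : ℕ) : ℝ) * ((n + 1).choose m : ℝ) - 1) * 2 ^ (n + 1)
      = ((n : ℝ) + 1) * (n + 1).choose m := by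
    push_cast; field_simp; ring
  rw [e3]
  simp at t2
  linarith

lemma aff (f : ℝ → ℝ) (hf : f 1 + f (-1) = 2 * f 0) :
    ∃ x, (x = 1 ∨ x = -1) ∧ f 0 ≤ f x := by
  by_cases h : f 0 ≤ f 1
  · exact ⟨1, Or.inl rfl, h⟩
  · exact ⟨-1, Or.inr rfl, by linarith⟩

lemma md_main (h d : ℕ) (hh : 0 < h) (A : Matrix (Fin h) (Fin h) ℝ)
    (hA : ∀ i j, A i j = 1 ∨ A i j = -1) (hAA : Aᵀ * A = (h : ℝ) • 1)
    (w : Fin d → Om h) (D : Matrix (Fin d) (Fin d) ℝ) (hD : ∀ i j, D i j = 1 ∨ D i j = -1) :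
    (h : ℝ) ^ ((h : ℝ) / 2) * (Matrix.of (fun i j => FF A (w i) (w j)) - D).det
      ≤ maxDet (h + d) := by
  have := md_block h d hh A hA hAA (Matrix.of fun j i => rv (w i) j) (fun i j => rv_pm _ _)
    (Matrix.of fun i k => sg (uu A (w i) k)) (fun i j => sg_pm _) D hD
  convert this using 5
  ext i j
  rw [Matrix.mul_assoc]
  simp [FF, Matrix.mul_apply, uu]

lemma md_one (h : ℕ) (hh : 0 < h) (A : Matrix (Fin h) (Fin h) ℝ)
    (hA : ∀ i j, A i j = 1 ∨ A i j = -1) (hAA : Aᵀ * A = (h : ℝ) • 1) :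
    (h : ℝ) ^ ((h : ℝ) / 2) * (1 + ee h) ≤ maxDet (h + 1) := by
  obtain ⟨a, ha⟩ := EE_exists h (fun a => FF A a a)
  rw [EE_FF h hh A hA hAA] at ha
  refine le_trans (mul_le_mul_of_nonneg_left ?_ (by positivity))
    (md_main h 1 hh A hA hAA ![a] !![-1] (by simp))
  rw [Matrix.det_fin_one]
  simp
  linarith

lemma md_two (h : ℕ) (hh : 0 < h) (A : Matrix (Fin h) (Fin h) ℝ)
    (hA : ∀ i j, A i j = 1 ∨ A i j = -1) (hAA : Aᵀ * A = (h : ℝ) • 1) :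
    (h : ℝ) ^ ((h : ℝ) / 2) * ((1 + ee h) ^ 2 - ee h ^ 2 / h) ≤ maxDet (h + 2) := by
  have E1 := EE_FF h hh A hA hAA
  have E2 := EE_FF2 h hh A hA hAA
  obtain ⟨a, ha⟩ := EE_exists h (fun a => (1 + ee h) + (1 + ee h - ee h / h) * FF A a a)
  obtain ⟨b, hb⟩ := EE_exists h (fun b => (1 + FF A a a) + (1 + FF A a a) * FF A b b
    - FF A a b * FF A b a)
  rw [EE_add, EE_mul, EE_const, E1] at ha
  rw [EE_sub, EE_add, EE_mul, EE_const, E1, E2] at hb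
  obtain ⟨x, hx, hfx⟩ := aff (fun x => (1 + FF A a a) * (1 + FF A b b)
    - (FF A a b - x) * (FF A b a - 0)) (by ring)
  obtain ⟨y, hy, hfy⟩ := aff (fun y => (1 + FF A a a) * (1 + FF A b b)
    - (FF A a b - x) * (FF A b a - y)) (by ring)
  refine le_trans (mul_le_mul_of_nonneg_left ?_ (by positivity))
    (md_main h 2 hh A hA hAA ![a, b] !![-1, x; y, -1] (by
      intro i j; fin_cases i <;> fin_cases j <;> simp [hx, hy]))
  rw [Matrix.det_fin_two]
  simp
  have e : (1 + ee h) ^ 2 - ee h ^ 2 / h = 1 + ee h + (1 + ee h - ee h / h) * ee h := by ring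
  linarith

lemma md_three (h : ℕ) (hh : 0 < h) (A : Matrix (Fin h) (Fin h) ℝ)
    (hA : ∀ i j, A i j = 1 ∨ A i j = -1) (hAA : Aᵀ * A = (h : ℝ) • 1) :
    (h : ℝ) ^ ((h : ℝ) / 2) * ((1 + ee h) ^ 3 - 3 * (1 + ee h) * (ee h ^ 2 / h)
      + 2 * (ee h ^ 3 / h ^ 2)) ≤ maxDet (h + 3) := by
  have E1 := EE_FF h hh A hA hAA
  have E2 := EE_FF2 h hh A hA hAA
  set e := ee h with he
  obtain ⟨a, ha⟩ := EE_exists h (fun a => ((1 + e) ^ 2 - e * (e / h)) +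
    ((1 + e) ^ 2 - e * (e / h) - 2 * (1 + e) * (e / h) + 2 * (e / h) ^ 2) * FF A a a)
  obtain ⟨b, hb⟩ := EE_exists h (fun b => ((1 + FF A a a) * (1 + e) - (e / h) * FF A a a) +
    ((1 + FF A a a) * (1 + e) - (1 + FF A a a) * (e / h) - (e / h) * FF A a a) * FF A b b
    + (2 * (e / h) - (1 + e)) * (FF A a b * FF A b a))
  obtain ⟨c, hc⟩ := EE_exists h (fun c => ((1 + FF A a a) * (1 + FF A b b) - FF A a b * FF A b a)
    + ((1 + FF A a a) * (1 + FF A b b) - FF A a b * FF A b a) * FF A c c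
    - (1 + FF A a a) * (FF A b c * FF A c b) - (1 + FF A b b) * (FF A a c * FF A c a)
    + FF A a b * (FF A b c * FF A c a) + FF A b a * (FF A a c * FF A c b))
  rw [EE_add, EE_mul, EE_const, E1] at ha
  rw [EE_add, EE_add, EE_mul, EE_mul, EE_const, E1, E2] at hb
  rw [EE_add, EE_add, EE_sub, EE_sub, EE_add, EE_mul, EE_mul, EE_mul, EE_mul, EE_mul, EE_const,
    E1, E2, E2, E2, E2] at hc
  let f : ℝ → ℝ → ℝ → ℝ → ℝ → ℝ → ℝ := fun x y z u v w =>
    (!![1 + FF A a a, FF A a b - x, FF A a c - y; FF A b a - z, 1 + FF A b b, FF A b c - u;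
      FF A c a - v, FF A c b - w, 1 + FF A c c]).det
  have hf : ∀ x y z u v w, f x y z u v w = (1 + FF A a a) * (1 + FF A b b) * (1 + FF A c c)
      - (1 + FF A a a) * (FF A b c - u) * (FF A c b - w)
      - (1 + FF A b b) * (FF A a c - y) * (FF A c a - v)
      - (1 + FF A c c) * (FF A a b - x) * (FF A b a - z)
      + (FF A a b - x) * (FF A b c - u) * (FF A c a - v)
      + (FF A b a - z) * (FF A a c - y) * (FF A c b - w) := by
    intro x y z u v w
    simp [f, Matrix.det_fin_three]
    ring
  obtain ⟨x, hx, hfx⟩ := aff (fun t => f t 0 0 0 0 0) (by simp only [hf]; ring)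
  obtain ⟨y, hy, hfy⟩ := aff (fun t => f x t 0 0 0 0) (by simp only [hf]; ring)
  obtain ⟨z, hz, hfz⟩ := aff (fun t => f x y t 0 0 0) (by simp only [hf]; ring)
  obtain ⟨u, hu, hfu⟩ := aff (fun t => f x y z t 0 0) (by simp only [hf]; ring)
  obtain ⟨v, hv, hfv⟩ := aff (fun t => f x y z u t 0) (by simp only [hf]; ring)
  obtain ⟨w, hw, hfw⟩ := aff (fun t => f x y z u v t) (by simp only [hf]; ring)
  refine le_trans (mul_le_mul_of_nonneg_left ?_ (by positivity))
    (md_main h 3 hh A hA hAA ![a, b, c] !![-1, x, y; z, -1, u; v, w, -1] (by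
      intro i j; fin_cases i <;> fin_cases j <;> simp [hx, hy, hz, hu, hv, hw]))
  have e1 : (Matrix.of (fun i j => FF A (![a, b, c] i) (![a, b, c] j))
      - !![-1, x, y; z, -1, u; v, w, -1]).det = f x y z u v w := by
    rw [hf, Matrix.det_fin_three]
    simp
    ring
  rw [e1]
  have h0 := hf 0 0 0 0 0 0
  refine le_trans ?_ (hfx.trans (hfy.trans (hfz.trans (hfu.trans (hfv.trans hfw)))))
  rw [h0]
  refine le_trans ?_ (le_trans hc (le_of_eq (by ring)))
  refine le_trans ?_ (le_trans hb (le_of_eq (by ring)))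
  refine le_trans ?_ (le_trans ha (le_of_eq (by ring)))
  exact le_of_eq (by ring)

/-- Let `n = h + d` where `h ≥ 4` is a Hadamard order and `1 ≤ d ≤ 3`.
Then `D(n) ≥ h^{h/2} (μ(h)^d − η)`, where `η = 0` if `d = 1`, `η = 1` if
`d = 2`, and `η = 5√h + 3` if `d = 3`. -/
theorem maxDet_lower_bound_small_d (h d n : ℕ)
    (hh : 4 ≤ h) (hH : IsHadamardOrder h)
    (hd1 : 1 ≤ d) (hd3 : d ≤ 3) (hn : n = h + d) :
    maxDet n ≥ (h : ℝ) ^ ((h : ℝ) / 2) *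
      (mu h ^ d -
        (if d = 1 then (0 : ℝ) else if d = 2 then 1
          else 5 * Real.sqrt h + 3)) := by
  obtain ⟨A, hA, hAA⟩ := hH
  have h0 : 0 < h := by omega
  have hr : (0 : ℝ) < h := by exact_mod_cast h0
  have e0 := ee_nonneg h
  have e1 : ee h ≤ Real.sqrt h := by
    rw [← EE_FF h h0 A hA hAA, ← EE_const h (Real.sqrt h)]
    exact EE_mono h _ _ (FF_le h h0 A hAA)
  have e2 := ee_ge h h0
  have m1 : 1 ≤ mu h := by
    unfold mu
    have : 0 ≤ (2 : ℝ) ^ (-(h : ℤ)) * h * (h.choose (h / 2) : ℝ) := by positivity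
    linarith
  have e3 : ee h ^ 2 / h ≤ 1 := by
    rw [div_le_one hr, ← Real.sq_sqrt hr.le]
    exact pow_le_pow_left₀ e0 e1 2
  have m2 : ∀ k, mu h ^ k ≤ (1 + ee h) ^ k := fun k =>
    pow_le_pow_left₀ (by linarith) (by linarith) k
  subst hn
  rw [ge_iff_le]
  interval_cases d
  · refine le_trans (mul_le_mul_of_nonneg_left ?_ (by positivity)) (md_one h h0 A hA hAA)
    simp
    linarith
  · refine le_trans (mul_le_mul_of_nonneg_left ?_ (by positivity)) (md_two h h0 A hA hAA)
    have := m2 2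
    norm_num
    linarith
  · refine le_trans (mul_le_mul_of_nonneg_left ?_ (by positivity)) (md_three h h0 A hA hAA)
    have := m2 3
    norm_num
    have p : 0 ≤ ee h ^ 3 / (h : ℝ) ^ 2 := by positivity
    have q : (1 + ee h) * (ee h ^ 2 / h) ≤ (1 + ee h) * 1 :=
      mul_le_mul_of_nonneg_left e3 (by linarith)
    have r := Real.sqrt_nonneg (h : ℝ)
    linarith
end
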